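/- Let α ∈ (0,1) and let X = (X_1,…,X_n) be α-concentrated. Then DQ^VaR_α(X) ≤ 1, and if the X_i are integrable, also DQ^ES_α(X) ≤ 1. -/

import Mathlib

open MeasureTheory ProbabilityTheory Filter Set

namespace DQ

variable {Ω : Type*} [MeasurableSpace Ω]

/-- An atomless probability measure: every non-null measurable set has a measurable
subset of strictly smaller positive measure. -/
def Atomless (P : Measure Ω) : Prop :=
  ∀ A : Set Ω, MeasurableSet A → 0 < P A →
    ∃ B, MeasurableSet B ∧ B ⊆ A ∧ 0 < P B ∧ P B < P A

/-- Value-at-Risk at level `α` (small-`α` convention):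
`VaR_α(X) = inf {x | P(X ≤ x) ≥ 1 - α}`. -/
noncomputable def VaR (P : Measure Ω) (α : ℝ) (X : Ω → ℝ) : ℝ :=
  sInf {x : ℝ | 1 - α ≤ (P {ω | X ω ≤ x}).toReal}

/-- Expected Shortfall at level `α`: `ES_α(X) = (1/α) ∫_0^α VaR_β(X) dβ`. -/
noncomputable def ES (P : Measure Ω) (α : ℝ) (X : Ω → ℝ) : ℝ :=
  (1 / α) * ∫ β in Set.Ioo (0 : ℝ) α, VaR P β X

/-- `α* = inf {β ∈ (0,1) | VaR_β(∑ Xᵢ) ≤ ∑ VaR_α(Xᵢ)}`, with `inf ∅ = 1`. -/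
noncomputable def alphaStarVaR (P : Measure Ω) (α : ℝ) {n : ℕ} (X : Fin n → Ω → ℝ) : ℝ :=
  sInf ({β ∈ Set.Ioo (0 : ℝ) 1 |
    VaR P β (fun ω => ∑ i, X i ω) ≤ ∑ i, VaR P α (X i)} ∪ {1})

/-- Diversification quotient based on VaR: `DQ^VaR_α(X) = α*/α`. -/
noncomputable def DQVaR (P : Measure Ω) (α : ℝ) {n : ℕ} (X : Fin n → Ω → ℝ) : ℝ :=
  alphaStarVaR P α X / α

/-- `α* = inf {β ∈ (0,1) | ES_β(∑ Xᵢ) ≤ ∑ ES_α(Xᵢ)}`, with `inf ∅ = 1`. -/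
noncomputable def alphaStarES (P : Measure Ω) (α : ℝ) {n : ℕ} (X : Fin n → Ω → ℝ) : ℝ :=
  sInf ({β ∈ Set.Ioo (0 : ℝ) 1 |
    ES P β (fun ω => ∑ i, X i ω) ≤ ∑ i, ES P α (X i)} ∪ {1})

/-- Diversification quotient based on ES: `DQ^ES_α(X) = α*/α`. -/
noncomputable def DQES (P : Measure Ω) (α : ℝ) {n : ℕ} (X : Fin n → Ω → ℝ) : ℝ :=
  alphaStarES P α X / α

end DQ

namespace DQ

variable {Ω : Type*} [MeasurableSpace Ω]

/-- `A` is a tail event of `X`: `0 < P(A) < 1` and, off a null set,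
`X(ω) ≥ X(ω')` for all `ω ∈ A` and `ω' ∈ Aᶜ`. -/
def TailEvent (P : Measure Ω) (X : Ω → ℝ) (A : Set Ω) : Prop :=
  MeasurableSet A ∧ 0 < P A ∧ P A < 1 ∧
  ∃ N : Set Ω, P N = 0 ∧ ∀ ω ∈ A \ N, ∀ ω' ∈ Aᶜ \ N, X ω' ≤ X ω

/-- `(X₁,…,Xₙ)` is `α`-concentrated: the components share a common tail event of
probability `α`. -/
def Concentrated (P : Measure Ω) {n : ℕ} (X : Fin n → Ω → ℝ) (α : ℝ) : Prop :=
  ∃ A : Set Ω, P A = ENNReal.ofReal α ∧ ∀ i, TailEvent P (X i) A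

end DQ

namespace DQ

variable {Ω : Type*} [MeasurableSpace Ω]

lemma VaR_le_iff (P : Measure Ω) [IsProbabilityMeasure P] {X : Ω → ℝ} (hX : Measurable X)
    {β : ℝ} (hβ : β ∈ Ioo (0 : ℝ) 1) (x : ℝ) :
    VaR P β X ≤ x ↔ 1 - β ≤ P.real {ω | X ω ≤ x} := by
  have : IsProbabilityMeasure (P.map X) := Measure.isProbabilityMeasure_map hX.aemeasurable
  have hF : ∀ y, P.real {ω | X ω ≤ y} = cdf (P.map X) y := by
    intro y
    rw [cdf_eq_real, map_measureReal_apply hX measurableSet_Iic]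
    rfl
  have hV : VaR P β X = sInf {y : ℝ | 1 - β ≤ cdf (P.map X) y} := by
    unfold VaR
    congr 1
    ext y
    rw [mem_ofPred_eq, mem_ofPred_eq, ← hF]
    rfl
  rw [hV, hF]
  have hne : {y : ℝ | 1 - β ≤ cdf (P.map X) y}.Nonempty := by
    have h := (tendsto_cdf_atTop (P.map X)).eventually_const_le (show 1 - β < 1 by linarith [hβ.1])
    exact h.exists
  have hbdd : BddBelow {y : ℝ | 1 - β ≤ cdf (P.map X) y} := by
    have h := (tendsto_cdf_atBot (P.map X)).eventually_lt_const
      (show 0 < 1 - β by linarith [hβ.2])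
    obtain ⟨z, hz⟩ := h.exists
    refine ⟨z, fun y hy => ?_⟩
    by_contra hlt
    have := monotone_cdf (P.map X) (le_of_lt (not_le.mp hlt))
    have hy' : 1 - β ≤ cdf (P.map X) y := hy
    linarith
  constructor
  · intro h
    by_contra hlt
    rw [not_le] at hlt
    have hc : Tendsto (cdf (P.map X)) (nhdsWithin x (Ioi x)) (nhds (cdf (P.map X) x)) :=
      ((cdf (P.map X)).right_continuous x).mono_left (nhdsWithin_mono x Ioi_subset_Ici_self)
    have h2 := hc.eventually_lt_const hlt
    obtain ⟨y, hy, hxy⟩ := (h2.and self_mem_nhdsWithin).exists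
    have : y ≤ sInf {y : ℝ | 1 - β ≤ cdf (P.map X) y} := by
      refine le_csInf hne fun z hz => ?_
      by_contra hlt2
      have := monotone_cdf (P.map X) (le_of_lt (not_le.mp hlt2))
      have hz' : 1 - β ≤ cdf (P.map X) z := hz
      linarith
    have hxy' : x < y := hxy
    linarith
  · intro h
    exact csInf_le hbdd h

lemma TailEvent.dichotomy {P : Measure Ω} {X : Ω → ℝ} {A : Set Ω} (h : TailEvent P X A) (x : ℝ) :
    P ({ω | X ω ≤ x} ∩ A) = 0 ∨ P (Aᶜ \ {ω | X ω ≤ x}) = 0 := by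
  obtain ⟨-, -, -, N, hN, hA⟩ := h
  by_cases hex : ∃ ω ∈ A \ N, X ω ≤ x
  · right
    obtain ⟨ω, hω, hx⟩ := hex
    refine measure_mono_null (fun ω' hω' => ?_) hN
    by_contra hn
    exact hω'.2 ((hA ω hω ω' ⟨hω'.1, hn⟩).trans hx)
  · left
    push Not at hex
    refine measure_mono_null (fun ω' hω' => ?_) hN
    by_contra hn
    exact absurd (hex ω' ⟨hω'.2, hn⟩) (not_lt.mpr hω'.1)

lemma TailEvent.real_inter {P : Measure Ω} [IsProbabilityMeasure P] {X : Ω → ℝ}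
    (hX : Measurable X) {A : Set Ω} (h : TailEvent P X A) (x : ℝ) :
    P.real ({ω | X ω ≤ x} ∩ A) = max (P.real A - (1 - P.real {ω | X ω ≤ x})) 0 ∧
    P.real (Aᶜ \ {ω | X ω ≤ x}) = max (1 - P.real A - P.real {ω | X ω ≤ x}) 0 := by
  have hm : MeasurableSet {ω | X ω ≤ x} := hX measurableSet_Iic
  have e1 := measureReal_inter_add_sdiff (μ := P) (s := {ω | X ω ≤ x}) h.1
  have e2 := measureReal_inter_add_sdiff (μ := P) (s := Aᶜ) hm
  have e3 := probReal_compl_eq_one_sub (μ := P) h.1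
  have e4 : {ω | X ω ≤ x} \ A = Aᶜ ∩ {ω | X ω ≤ x} := by
    rw [diff_eq, inter_comm]
  rw [e4] at e1
  have p1 : 0 ≤ P.real ({ω | X ω ≤ x} ∩ A) := measureReal_nonneg
  have p2 : 0 ≤ P.real (Aᶜ \ {ω | X ω ≤ x}) := measureReal_nonneg
  rcases h.dichotomy x with h0 | h0
  · have h0' : P.real ({ω | X ω ≤ x} ∩ A) = 0 := by simp [measureReal_def, h0]
    constructor
    · rw [max_eq_right] <;> linarith
    · rw [max_eq_left] <;> linarith
  · have h0' : P.real (Aᶜ \ {ω | X ω ≤ x}) = 0 := by simp [measureReal_def, h0]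
    constructor
    · rw [max_eq_left] <;> linarith
    · rw [max_eq_right] <;> linarith

lemma VaR_antitoneOn (P : Measure Ω) [IsProbabilityMeasure P] {X : Ω → ℝ} (hX : Measurable X) :
    AntitoneOn (fun β => VaR P β X) (Ioo (0 : ℝ) 1) := by
  intro a ha b hb hab
  change VaR P b X ≤ VaR P a X
  rw [VaR_le_iff P hX hb]
  have := (VaR_le_iff P hX ha _).1 le_rfl
  linarith

lemma TailEvent.integral_VaR {P : Measure Ω} [IsProbabilityMeasure P] {X : Ω → ℝ}
    (hX : Measurable X) {A : Set Ω} (h : TailEvent P X A) {α : ℝ} (hα : α ∈ Ioo (0 : ℝ) 1)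
    (hA : P.real A = α) :
    ∫ β in Ioo (0 : ℝ) α, VaR P β X = ∫ ω in A, X ω ∂P := by
  have hsub : Ioo (0 : ℝ) α ⊆ Ioo 0 1 := Ioo_subset_Ioo_right hα.2.le
  have hq : AEMeasurable (fun β => VaR P β X) (volume.restrict (Ioo (0 : ℝ) α)) :=
    aemeasurable_restrict_of_antitoneOn measurableSet_Ioo ((VaR_antitoneOn P hX).mono hsub)
  have key : (P.restrict A).map X =
      (volume.restrict (Ioo (0 : ℝ) α)).map (fun β => VaR P β X) := by
    refine Measure.ext_of_Iic _ _ fun x => ?_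
    have hm : MeasurableSet {ω | X ω ≤ x} := hX measurableSet_Iic
    rw [Measure.map_apply hX measurableSet_Iic, Measure.map_apply_of_aemeasurable hq
      measurableSet_Iic, Measure.restrict_apply (hX measurableSet_Iic),
      Measure.restrict_apply' measurableSet_Ioo]
    have e1 : (fun β => VaR P β X) ⁻¹' Iic x ∩ Ioo 0 α =
        Ici (1 - P.real {ω | X ω ≤ x}) ∩ Ioo 0 α := by
      ext β
      refine and_congr_left fun hβ => ?_
      have := VaR_le_iff P hX (hsub hβ) x
      simp only [mem_preimage, mem_Iic, mem_Ici, this]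
      constructor <;> intro <;> linarith
    have e2 : volume (Ici (1 - P.real {ω | X ω ≤ x}) ∩ Ioo 0 α) =
        ENNReal.ofReal (α - (1 - P.real {ω | X ω ≤ x})) := by
      have hp : 0 ≤ 1 - P.real {ω | X ω ≤ x} := by linarith [measureReal_le_one (μ := P) (s := {ω | X ω ≤ x})]
      apply le_antisymm
      · rw [← Real.volume_Ico]
        exact measure_mono fun β hβ => ⟨hβ.1, hβ.2.2⟩
      · rw [← Real.volume_Ioo]
        exact measure_mono fun β hβ => ⟨hβ.1.le, lt_of_le_of_lt hp hβ.1, hβ.2⟩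
    rw [e1, e2]
    have e3 := (h.real_inter hX x).1
    rw [hA] at e3
    change P ({ω | X ω ≤ x} ∩ A) = _
    rw [← ENNReal.ofReal_toReal (measure_ne_top P ({ω | X ω ≤ x} ∩ A))]
    change ENNReal.ofReal (P.real _) = _
    rw [e3]
    rcases le_total (α - (1 - P.real {ω | X ω ≤ x})) 0 with h0 | h0
    · rw [max_eq_right h0, ENNReal.ofReal_zero, ENNReal.ofReal_of_nonpos h0]
    · rw [max_eq_left h0]
  have i1 := integral_map (μ := P.restrict A) hX.aemeasurable
    (f := fun y : ℝ => y) measurable_id.aestronglyMeasurable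
  have i2 := integral_map hq
    (f := fun y : ℝ => y) measurable_id.aestronglyMeasurable
  rw [← i2, ← key, i1]

lemma TailEvent.sum {P : Measure Ω} {n : ℕ} {X : Fin n → Ω → ℝ} {A : Set Ω} (i₀ : Fin n)
    (h : ∀ i, TailEvent P (X i) A) : TailEvent P (fun ω => ∑ i, X i ω) A := by
  refine ⟨(h i₀).1, (h i₀).2.1, (h i₀).2.2.1, ?_⟩
  choose N hN hA using fun i => (h i).2.2.2
  refine ⟨⋃ i, N i, measure_iUnion_null hN, fun ω hω ω' hω' => ?_⟩
  refine Finset.sum_le_sum fun i _ => hA i ω ⟨hω.1, fun hn => hω.2 ?_⟩ ω' ⟨hω'.1, fun hn => hω'.2 ?_⟩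
  · exact mem_iUnion.2 ⟨i, hn⟩
  · exact mem_iUnion.2 ⟨i, hn⟩

lemma VaR_zero (P : Measure Ω) [IsProbabilityMeasure P] {β : ℝ} (hβ : β ∈ Ioo (0 : ℝ) 1) :
    VaR P β (fun _ => (0 : ℝ)) = 0 := by
  apply le_antisymm
  · rw [VaR_le_iff P measurable_const hβ]
    simp [hβ.1.le]
  · by_contra hlt
    have := (VaR_le_iff P measurable_const hβ _).1 (le_refl (VaR P β (fun _ => (0 : ℝ))))
    simp [hlt] at this
    linarith [hβ.2]

lemma VaR_sum_le (P : Measure Ω) [IsProbabilityMeasure P] {n : ℕ} {X : Fin n → Ω → ℝ}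
    (hX : ∀ i, Measurable (X i)) {α : ℝ} (hα : α ∈ Ioo (0 : ℝ) 1) {A : Set Ω} (i₀ : Fin n)
    (hA : P.real A = α) (h : ∀ i, TailEvent P (X i) A) :
    VaR P α (fun ω => ∑ i, X i ω) ≤ ∑ i, VaR P α (X i) := by
  rw [VaR_le_iff P (Finset.measurable_sum _ fun i _ => hX i) hα]
  have hz : ∀ i, P (Aᶜ \ {ω | X i ω ≤ VaR P α (X i)}) = 0 := by
    intro i
    have h1 := (VaR_le_iff P (hX i) hα _).1 (le_refl (VaR P α (X i)))
    have h2 := ((h i).real_inter (hX i) (VaR P α (X i))).2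
    rw [hA, max_eq_right (by linarith)] at h2
    exact (measureReal_eq_zero_iff).1 h2
  have hU := measure_iUnion_null hz
  have hle : P Aᶜ ≤ P {ω | ∑ i, X i ω ≤ ∑ i, VaR P α (X i)} := by
    apply measure_mono_ae
    filter_upwards [measure_eq_zero_iff_ae_notMem.1 hU] with ω hω hωA
    change ∑ i, X i ω ≤ ∑ i, VaR P α (X i)
    refine Finset.sum_le_sum fun i _ => ?_
    by_contra hn
    exact hω (mem_iUnion.2 ⟨i, hωA, hn⟩)
  have := ENNReal.toReal_mono (measure_ne_top _ _) hle
  have e := probReal_compl_eq_one_sub (μ := P) (h i₀).1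
  rw [hA] at e
  rw [← e]
  exact this

end DQ

open DQ in
/-- If X is α-concentrated, then DQ^VaR_α(X) ≤ 1, and if the Xᵢ are integrable,
also DQ^ES_α(X) ≤ 1. -/
theorem stmt6 {Ω : Type*} [MeasurableSpace Ω] (P : Measure Ω) [IsProbabilityMeasure P]
    (hP : Atomless P) (n : ℕ) (X : Fin n → Ω → ℝ) (hX : ∀ i, Measurable (X i))
    (α : ℝ) (hα : α ∈ Set.Ioo (0 : ℝ) 1) (hconc : Concentrated P X α) :
    DQVaR P α X ≤ 1 ∧ ((∀ i, Integrable (X i) P) → DQES P α X ≤ 1) := by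
  obtain ⟨A, hPA, hT⟩ := hconc
  have hA : P.real A = α := by
    rw [measureReal_def, hPA, ENNReal.toReal_ofReal hα.1.le]
  have hbd : ∀ p : ℝ → Prop, BddBelow ({β ∈ Set.Ioo (0 : ℝ) 1 | p β} ∪ {1}) := by
    intro p
    refine ⟨0, ?_⟩
    rintro β (hβ | hβ)
    · exact hβ.1.1.le
    · rw [Set.mem_singleton_iff.1 hβ]; exact zero_le_one
  constructor
  · unfold DQVaR alphaStarVaR
    rw [div_le_one hα.1]
    refine csInf_le (hbd _) (Or.inl ⟨hα, ?_⟩)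
    rcases Nat.eq_zero_or_pos n with rfl | hn
    · simp [VaR_zero P hα]
    · exact VaR_sum_le P hX hα ⟨0, hn⟩ hA hT
  · intro hint
    unfold DQES alphaStarES
    rw [div_le_one hα.1]
    refine csInf_le (hbd _) (Or.inl ⟨hα, ?_⟩)
    rcases Nat.eq_zero_or_pos n with rfl | hn
    · have : ∫ β in Set.Ioo (0 : ℝ) α, VaR P β (fun _ : Ω => (0 : ℝ)) = 0 := by
        rw [setIntegral_congr_fun (g := fun _ => (0 : ℝ)) measurableSet_Ioo
          (fun β hβ => VaR_zero P ⟨hβ.1, hβ.2.trans hα.2⟩)]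
        simp
      simp [ES, this]
    · have hS := TailEvent.sum ⟨0, hn⟩ hT
      apply le_of_eq
      unfold ES
      rw [hS.integral_VaR (Finset.measurable_sum _ fun i _ => hX i) hα hA, ← Finset.mul_sum,
        integral_finsetSum _ fun i _ => (hint i).integrableOn]
      congr 1
      exact Finset.sum_congr rfl fun i _ => ((hT i).integral_VaR (hX i) hα hA).symm
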